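/- Let ρ be a rank function on a skeletally small triangulated category C. Then for all composable morphisms f and g one has ρ(f ∘ g) ≤ ρ(f) and ρ(f ∘ g) ≤ ρ(g); for parallel morphisms f, g one has ρ(f + g) ≤ ρ(f) + ρ(g); and for a morphism given by an upper-triangular matrix one has ρ(f) + ρ(g) ≤ ρ of the matrix [[f, h],[0, g]]. -/

import Mathlib

/-!
Statement 7: For a rank function `ρ` on a skeletally small triangulated category:
`ρ(f ∘ g) ≤ ρ(f)`, `ρ(f ∘ g) ≤ ρ(g)`, `ρ(f + g) ≤ ρ(f) + ρ(g)`, and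
`ρ(f) + ρ(g) ≤ ρ([[f, h], [0, g]])` for an upper-triangular matrix morphism.
-/

open CategoryTheory CategoryTheory.Limits CategoryTheory.Pretriangulated

universe v u

variable (C : Type u) [Category.{v} C] [Preadditive C] [HasZeroObject C] [HasShift C ℤ]
  [∀ n : ℤ, (shiftFunctor C n).Additive] [Pretriangulated C] [HasBinaryBiproducts C]
  [EssentiallySmall.{v} C]

/-- A rank function on a triangulated category. -/
structure RankFunction where
  rank : ∀ ⦃X Y : C⦄, (X ⟶ Y) → ℝ
  nonneg : ∀ ⦃X Y : C⦄ (f : X ⟶ Y), 0 ≤ rank f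
  additive : ∀ ⦃X₁ Y₁ X₂ Y₂ : C⦄ (f : X₁ ⟶ Y₁) (g : X₂ ⟶ Y₂),
    rank (biprod.map f g) = rank f + rank g
  rankNullity : ∀ (T : Triangle C), (T ∈ distTriang C) →
    rank T.mor₁ + rank T.mor₂ = rank (𝟙 T.obj₂)
  shiftInv : ∀ ⦃X Y : C⦄ (f : X ⟶ Y),
    rank ((shiftFunctor C (1 : ℤ)).map f) = rank f

variable {C}

/-!
The rank of `f` depends only on the image of `Hom(-, f)`, so rank-nullity holds not just for
distinguished triangles but for every weak kernel. If `k` is the cofibre map of `f ≫ g`, then the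
cones `K` of `f ≫ g` and `W` of `g` fit into a sequence `Y ⟶ K ⟶ X⟦1⟧ ⊞ W ⟶ Y⟦1⟧` of weak
kernels starting with `g ≫ k`, and counting ranks around it gives
`ρ (f ≫ g) + ρ (g ≫ k) = ρ g`. Hence `ρ (f ≫ g) ≤ ρ g`, and comparing weak kernels turns this into
`ρ (f ≫ g) ≤ ρ f`. The same identity gives `ρ (f ≫ g) + ρ (g ≫ h) ≤ ρ g` whenever
`f ≫ g ≫ h = 0`, and the inequality for an upper-triangular matrix `M` is the case
`inl ≫ M ≫ snd = 0`.
-/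

section WeakKernel

variable {D : Type*} [Category D] [HasZeroMorphisms D] {A B E : D}

/-- `q : A ⟶ E` is a weak kernel of `p : E ⟶ B`, that is, `Hom(-, A) ⟶ Hom(-, E) ⟶ Hom(-, B)` is
exact. This is Mathlib's weak limit condition, as a proposition on the pair of morphisms. -/
def IsWeakKernel (q : A ⟶ E) (p : E ⟶ B) : Prop :=
  ∃ w : q ≫ p = 0, Nonempty (IsWeakLimit (KernelFork.ofι q w))

theorem isWeakKernel_iff {q : A ⟶ E} {p : E ⟶ B} :
    IsWeakKernel q p ↔ q ≫ p = 0 ∧ ∀ ⦃T : D⦄ (t : T ⟶ E), t ≫ p = 0 → ∃ s, s ≫ q = t where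
  mp := fun ⟨w, ⟨hq⟩⟩ => ⟨w, fun _ t ht =>
    ⟨hq.lift (KernelFork.ofι t ht), hq.fac _ WalkingParallelPair.zero⟩⟩
  mpr := fun ⟨w, hq⟩ => ⟨w, ⟨Fork.IsWeakLimit.mk' _ fun s =>
    ⟨_, (hq s.ι (KernelFork.condition s)).choose_spec⟩⟩⟩

theorem IsWeakKernel.comp_eq_zero {q : A ⟶ E} {p : E ⟶ B} (h : IsWeakKernel q p) : q ≫ p = 0 :=
  h.1

theorem IsWeakKernel.exists_comp_eq {q : A ⟶ E} {p : E ⟶ B} (h : IsWeakKernel q p) {T : D}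
    (t : T ⟶ E) (ht : t ≫ p = 0) : ∃ s, s ≫ q = t :=
  (isWeakKernel_iff.1 h).2 t ht

end WeakKernel

section Triangle

variable {D : Type*} [Category D] [Preadditive D] [HasZeroObject D] [HasShift D ℤ]
  [∀ n : ℤ, (shiftFunctor D n).Additive] [Pretriangulated D]

section

variable {X Y Z : D} {f : X ⟶ Y} {g : Y ⟶ Z} {h : Z ⟶ X⟦(1 : ℤ)⟧}
  (hT : Triangle.mk f g h ∈ distTriang D)
include hT

theorem isWeakKernel_mor₁_mor₂ : IsWeakKernel f g :=
  ⟨comp_distTriang_mor_zero₁₂ _ hT, ⟨isWeakLimitKernelForkOfDistTriangle _ hT⟩⟩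

theorem isWeakKernel_mor₂_mor₃ : IsWeakKernel g h :=
  isWeakKernel_mor₁_mor₂ (rot_of_distTriang _ hT)

theorem isWeakKernel_mor₃_shift_mor₁ : IsWeakKernel h (f⟦(1 : ℤ)⟧') :=
  isWeakKernel_iff.2 ⟨comp_distTriang_mor_zero₃₁ _ hT, fun _ t ht =>
    (Triangle.coyoneda_exact₁ _ hT t ht).imp fun _ => Eq.symm⟩

theorem isWeakKernel_shift_mor₁_shift_mor₂ :
    IsWeakKernel (f⟦(1 : ℤ)⟧') (g⟦(1 : ℤ)⟧') := by
  have hrot : IsWeakKernel (-f⟦(1 : ℤ)⟧') (g⟦(1 : ℤ)⟧') :=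
    isWeakKernel_mor₃_shift_mor₁ (rot_of_distTriang _ hT)
  refine isWeakKernel_iff.2 ⟨by simpa using hrot.comp_eq_zero, fun _ t ht => ?_⟩
  obtain ⟨s, hs⟩ := hrot.exists_comp_eq t ht
  exact ⟨-s, by simpa using hs⟩

end

/- For an arbitrary fill-in `φ` the sequence `Y ⟶ K ⟶ X⟦1⟧ ⊞ W ⟶ Y⟦1⟧` need not be a distinguished
triangle, but it is still exact after applying `Hom(T, -)`, which is all that ranks see. -/
variable {X Y Z K W : D} {f : X ⟶ Y} {g : Y ⟶ Z} {k : Z ⟶ K} {l : K ⟶ X⟦(1 : ℤ)⟧}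
  {a : Z ⟶ W} {b : W ⟶ Y⟦(1 : ℤ)⟧} {φ : K ⟶ W}

theorem isWeakKernel_comp_lift (hfg : Triangle.mk (f ≫ g) k l ∈ distTriang D)
    (hg : Triangle.mk g a b ∈ distTriang D) (hφ : k ≫ φ = a) :
    IsWeakKernel (g ≫ k) (biprod.lift l φ) := by
  have hkl : k ≫ l = 0 := comp_distTriang_mor_zero₂₃ _ hfg
  have hga : g ≫ a = 0 := comp_distTriang_mor_zero₁₂ _ hg
  refine isWeakKernel_iff.2 ⟨by ext <;> simp [hkl, hφ, hga], fun T t ht => ?_⟩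
  have htl : t ≫ l = 0 := by simpa using ht =≫ biprod.fst
  have htφ : t ≫ φ = 0 := by simpa using ht =≫ biprod.snd
  obtain ⟨z, rfl⟩ := (isWeakKernel_mor₂_mor₃ hfg).exists_comp_eq t htl
  obtain ⟨y, rfl⟩ := (isWeakKernel_mor₁_mor₂ hg).exists_comp_eq z
    (by rw [← hφ, ← Category.assoc, htφ])
  exact ⟨y, (Category.assoc _ _ _).symm⟩

theorem isWeakKernel_lift_desc (hfg : Triangle.mk (f ≫ g) k l ∈ distTriang D)
    (hg : Triangle.mk g a b ∈ distTriang D) (hφ : k ≫ φ = a) (hl : l ≫ f⟦(1 : ℤ)⟧' = φ ≫ b) :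
    IsWeakKernel (biprod.lift l φ) (biprod.desc (f⟦(1 : ℤ)⟧') (-b)) := by
  have hkl : k ≫ l = 0 := comp_distTriang_mor_zero₂₃ _ hfg
  have hbg : b ≫ g⟦(1 : ℤ)⟧' = 0 := comp_distTriang_mor_zero₃₁ _ hg
  refine isWeakKernel_iff.2 ⟨by simp [hl], fun T t ht => ?_⟩
  obtain ⟨x, c, rfl⟩ : ∃ x c, t = biprod.lift x c :=
    ⟨t ≫ biprod.fst, t ≫ biprod.snd, by ext <;> simp⟩
  have hxc : x ≫ f⟦(1 : ℤ)⟧' = c ≫ b := by simpa [add_neg_eq_zero] using ht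
  obtain ⟨s, rfl⟩ := (isWeakKernel_mor₃_shift_mor₁ hfg).exists_comp_eq x
    (by rw [Functor.map_comp, reassoc_of% hxc, hbg, comp_zero])
  obtain ⟨z, hz⟩ := (isWeakKernel_mor₂_mor₃ hg).exists_comp_eq (c - s ≫ φ)
    (by simp [← hxc, hl])
  refine ⟨s + z ≫ k, ?_⟩
  ext
  · simp [hkl]
  · simp [hφ, hz]

theorem isWeakKernel_desc_shift (hfg : Triangle.mk (f ≫ g) k l ∈ distTriang D)
    (hg : Triangle.mk g a b ∈ distTriang D) :
    IsWeakKernel (biprod.desc (f⟦(1 : ℤ)⟧') (-b)) ((g ≫ k)⟦(1 : ℤ)⟧') := by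
  have hfgk : f ≫ g ≫ k = 0 :=
    (Category.assoc f g k).symm.trans (comp_distTriang_mor_zero₁₂ _ hfg)
  have hbg : b ≫ g⟦(1 : ℤ)⟧' = 0 := comp_distTriang_mor_zero₃₁ _ hg
  refine isWeakKernel_iff.2 ⟨?_, fun T y hy => ?_⟩
  · ext
    · simp [← Functor.map_comp, hfgk]
    · simp [reassoc_of% hbg]
  obtain ⟨x, hx⟩ :=
    (isWeakKernel_shift_mor₁_shift_mor₂ hfg).exists_comp_eq (y ≫ g⟦(1 : ℤ)⟧')
      (by simpa using hy)
  obtain ⟨c, hc⟩ :=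
    (isWeakKernel_mor₃_shift_mor₁ hg).exists_comp_eq (y - x ≫ f⟦(1 : ℤ)⟧')
      (by simp [← hx])
  exact ⟨biprod.lift x (-c), by simp [hc]⟩

end Triangle

namespace RankFunction

omit [EssentiallySmall.{v} C]

variable (ρ : RankFunction C)

theorem rank_add_rank_of_distTriang {X Y Z : C} {f : X ⟶ Y} {g : Y ⟶ Z} {h : Z ⟶ X⟦(1 : ℤ)⟧}
    (hT : Triangle.mk f g h ∈ distTriang C) : ρ.rank f + ρ.rank g = ρ.rank (𝟙 Y) :=
  ρ.rankNullity _ hT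

theorem rank_iso_comp {X X' Y : C} (e : X' ≅ X) (f : X ⟶ Y) :
    ρ.rank (e.hom ≫ f) = ρ.rank f := by
  obtain ⟨Z, g, h, hf⟩ := distinguished_cocone_triangle f
  have hef : Triangle.mk (e.hom ≫ f) g (h ≫ e.inv⟦(1 : ℤ)⟧') ∈ distTriang C :=
    isomorphic_distinguished _ hf _ <|
      Triangle.isoMk _ _ e (Iso.refl _) (Iso.refl _) (Category.comp_id _)
        ((Category.comp_id g).trans (Category.id_comp g).symm)
        (show (h ≫ e.inv⟦(1 : ℤ)⟧') ≫ e.hom⟦(1 : ℤ)⟧' = 𝟙 Z ≫ h by simp [← Functor.map_comp])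
  have hrank_f : ρ.rank f + ρ.rank g = ρ.rank (𝟙 Y) := ρ.rank_add_rank_of_distTriang hf
  have hrank_ef : ρ.rank (e.hom ≫ f) + ρ.rank g = ρ.rank (𝟙 Y) := ρ.rank_add_rank_of_distTriang hef
  linarith

open ZeroObject in
theorem rank_to_zero (X : C) : ρ.rank (0 : X ⟶ (0 : C)) = 0 := by
  have h : ρ.rank (𝟙 X) + ρ.rank (0 : X ⟶ (0 : C)) = ρ.rank (𝟙 X) :=
    ρ.rank_add_rank_of_distTriang (contractible_distinguished X)
  linarith

theorem rank_id_shift (X : C) : ρ.rank (𝟙 (X⟦(1 : ℤ)⟧)) = ρ.rank (𝟙 X) := by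
  rw [← (shiftFunctor C (1 : ℤ)).map_id, ρ.shiftInv]

theorem rank_id_biprod (X Y : C) : ρ.rank (𝟙 (X ⊞ Y)) = ρ.rank (𝟙 X) + ρ.rank (𝟙 Y) := by
  have hid : 𝟙 (X ⊞ Y) = biprod.map (𝟙 X) (𝟙 Y) := by ext <;> simp
  rw [hid, ρ.additive]

open ZeroObject in
theorem rank_eq_of_factors {E E' Y : C} {p : E ⟶ Y} {p' : E' ⟶ Y}
    (hp : ∃ a, a ≫ p' = p) (hp' : ∃ b, b ≫ p = p') : ρ.rank p = ρ.rank p' := by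
  -- As in the Schanuel lemma: padded by zero maps, the two morphisms differ by an isomorphism.
  obtain ⟨a, ha⟩ := hp
  obtain ⟨b, hb⟩ := hp'
  let e : E ⊞ E' ≅ E' ⊞ E :=
    { hom := biprod.desc (biprod.lift a (𝟙 E)) (biprod.lift (𝟙 E' - b ≫ a) (-b))
      inv := biprod.desc (biprod.lift b (𝟙 E')) (biprod.lift (𝟙 E - a ≫ b) (-a))
      hom_inv_id := by ext <;> simp
      inv_hom_id := by ext <;> simp }
  have he : e.hom ≫ biprod.map p' (0 : E ⟶ (0 : C)) = biprod.map p (0 : E' ⟶ (0 : C)) := by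
    ext <;> simp [e, ha, hb]
  simpa [he, ρ.additive, ρ.rank_to_zero] using
    ρ.rank_iso_comp e (biprod.map p' (0 : E ⟶ (0 : C)))

theorem rank_add_rank_of_isWeakKernel {A E B : C} {q : A ⟶ E} {p : E ⟶ B}
    (h : IsWeakKernel q p) : ρ.rank q + ρ.rank p = ρ.rank (𝟙 E) := by
  obtain ⟨F, i, d, hp⟩ := distinguished_cocone_triangle₁ p
  have hi : IsWeakKernel i p := isWeakKernel_mor₁_mor₂ hp
  rw [ρ.rank_eq_of_factors (hi.exists_comp_eq q h.comp_eq_zero)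
    (h.exists_comp_eq i hi.comp_eq_zero)]
  exact ρ.rank_add_rank_of_distTriang hp

theorem two_mul_rank_of_isWeakKernel {X Y Z : C} {f : X ⟶ Y} {g : Y ⟶ Z} {h : Z ⟶ X⟦(1 : ℤ)⟧}
    (hfg : IsWeakKernel f g) (hgh : IsWeakKernel g h) (hhf : IsWeakKernel h (f⟦(1 : ℤ)⟧')) :
    2 * ρ.rank f = ρ.rank (𝟙 X) + ρ.rank (𝟙 Y) - ρ.rank (𝟙 Z) := by
  have rank_Y := ρ.rank_add_rank_of_isWeakKernel hfg
  have rank_Z := ρ.rank_add_rank_of_isWeakKernel hgh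
  have rank_X := ρ.rank_add_rank_of_isWeakKernel hhf
  rw [ρ.shiftInv, ρ.rank_id_shift] at rank_X
  linarith

theorem two_mul_rank_of_distTriang {X Y Z : C} {f : X ⟶ Y} {g : Y ⟶ Z} {h : Z ⟶ X⟦(1 : ℤ)⟧}
    (hT : Triangle.mk f g h ∈ distTriang C) :
    2 * ρ.rank f = ρ.rank (𝟙 X) + ρ.rank (𝟙 Y) - ρ.rank (𝟙 Z) :=
  ρ.two_mul_rank_of_isWeakKernel (isWeakKernel_mor₁_mor₂ hT) (isWeakKernel_mor₂_mor₃ hT)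
    (isWeakKernel_mor₃_shift_mor₁ hT)

theorem rank_comp_add_rank_comp_of_distTriang {X Y Z K : C} {f : X ⟶ Y} {g : Y ⟶ Z} {k : Z ⟶ K}
    {l : K ⟶ X⟦(1 : ℤ)⟧} (hfg : Triangle.mk (f ≫ g) k l ∈ distTriang C) :
    ρ.rank (f ≫ g) + ρ.rank (g ≫ k) = ρ.rank g := by
  obtain ⟨W, a, b, hg⟩ := distinguished_cocone_triangle g
  obtain ⟨φ, hφ : k ≫ φ = 𝟙 Z ≫ a, hl : l ≫ f⟦(1 : ℤ)⟧' = φ ≫ b⟩ :=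
    complete_distinguished_triangle_morphism _ _ hfg hg f (𝟙 Z) (Category.comp_id _)
  rw [Category.id_comp] at hφ
  have rank_fg : 2 * ρ.rank (f ≫ g) = ρ.rank (𝟙 X) + ρ.rank (𝟙 Z) - ρ.rank (𝟙 K) :=
    ρ.two_mul_rank_of_distTriang hfg
  have rank_g : 2 * ρ.rank g = ρ.rank (𝟙 Y) + ρ.rank (𝟙 Z) - ρ.rank (𝟙 W) :=
    ρ.two_mul_rank_of_distTriang hg
  have rank_gk : 2 * ρ.rank (g ≫ k) = ρ.rank (𝟙 Y) + ρ.rank (𝟙 K) -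
      (ρ.rank (𝟙 X) + ρ.rank (𝟙 W)) := by
    rw [← ρ.rank_id_shift X, ← ρ.rank_id_biprod (X⟦(1 : ℤ)⟧) W]
    exact ρ.two_mul_rank_of_isWeakKernel (isWeakKernel_comp_lift hfg hg hφ)
      (isWeakKernel_lift_desc hfg hg hφ hl) (isWeakKernel_desc_shift hfg hg)
  linarith

theorem rank_comp_le_right {X Y Z : C} (f : X ⟶ Y) (g : Y ⟶ Z) :
    ρ.rank (f ≫ g) ≤ ρ.rank g := by
  obtain ⟨K, k, l, hfg⟩ := distinguished_cocone_triangle (f ≫ g)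
  rw [← ρ.rank_comp_add_rank_comp_of_distTriang hfg]
  exact le_add_of_nonneg_right (ρ.nonneg _)

theorem rank_comp_le_left {X Y Z : C} (f : X ⟶ Y) (g : Y ⟶ Z) :
    ρ.rank (f ≫ g) ≤ ρ.rank f := by
  obtain ⟨F, i, d, hf⟩ := distinguished_cocone_triangle₁ f
  obtain ⟨G, j, d', hfg⟩ := distinguished_cocone_triangle₁ (f ≫ g)
  have hif : i ≫ f = 0 := comp_distTriang_mor_zero₁₂ _ hf
  obtain ⟨s, rfl⟩ := (isWeakKernel_mor₁_mor₂ hfg).exists_comp_eq i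
    (by rw [reassoc_of% hif, zero_comp])
  have rank_f : ρ.rank (s ≫ j) + ρ.rank f = ρ.rank (𝟙 X) := ρ.rank_add_rank_of_distTriang hf
  have rank_fg : ρ.rank j + ρ.rank (f ≫ g) = ρ.rank (𝟙 X) := ρ.rank_add_rank_of_distTriang hfg
  linarith [ρ.rank_comp_le_right s j]

theorem rank_add_le {X Y : C} (f g : X ⟶ Y) : ρ.rank (f + g) ≤ ρ.rank f + ρ.rank g := by
  have hdesc : biprod.desc f g = biprod.map f g ≫ biprod.desc (𝟙 Y) (𝟙 Y) := by ext <;> simp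
  calc ρ.rank (f + g)
      = ρ.rank (biprod.lift (𝟙 X) (𝟙 X) ≫ biprod.desc f g) := by rw [biprod.add_eq_lift_id_desc]
    _ ≤ ρ.rank (biprod.desc f g) := ρ.rank_comp_le_right _ _
    _ ≤ ρ.rank (biprod.map f g) := hdesc ▸ ρ.rank_comp_le_left _ _
    _ = ρ.rank f + ρ.rank g := ρ.additive f g

theorem rank_comp_add_rank_comp_le {X Y Z V : C} (f : X ⟶ Y) (g : Y ⟶ Z) (h : Z ⟶ V)
    (w : f ≫ g ≫ h = 0) : ρ.rank (f ≫ g) + ρ.rank (g ≫ h) ≤ ρ.rank g := by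
  obtain ⟨K, k, l, hfg⟩ := distinguished_cocone_triangle (f ≫ g)
  obtain ⟨s, rfl : h = k ≫ s⟩ := Triangle.yoneda_exact₂ _ hfg h ((Category.assoc _ _ _).trans w)
  calc ρ.rank (f ≫ g) + ρ.rank (g ≫ k ≫ s)
      ≤ ρ.rank (f ≫ g) + ρ.rank (g ≫ k) := by
        rw [← Category.assoc g k s]
        exact add_le_add_right (ρ.rank_comp_le_left _ _) _
    _ = ρ.rank g := ρ.rank_comp_add_rank_comp_of_distTriang hfg

theorem rank_add_rank_le_rank_triangular {X₁ X₂ Y₁ Y₂ : C} (f : X₁ ⟶ Y₁) (g : X₂ ⟶ Y₂)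
    (h : X₂ ⟶ Y₁) :
    ρ.rank f + ρ.rank g ≤ ρ.rank (biprod.desc (biprod.lift f 0) (biprod.lift h g)) := by
  set M : X₁ ⊞ X₂ ⟶ Y₁ ⊞ Y₂ := biprod.desc (biprod.lift f 0) (biprod.lift h g) with hM
  have rank_f : ρ.rank f ≤ ρ.rank (biprod.inl ≫ M) := by
    simpa [hM] using ρ.rank_comp_le_left (biprod.inl ≫ M) biprod.fst
  have rank_g : ρ.rank g ≤ ρ.rank (M ≫ biprod.snd) := by
    simpa [hM] using ρ.rank_comp_le_right biprod.inr (M ≫ biprod.snd)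
  exact (add_le_add rank_f rank_g).trans
    (ρ.rank_comp_add_rank_comp_le biprod.inl M biprod.snd (by simp [hM]))

end RankFunction

omit [EssentiallySmall.{v} C] in
theorem rankFunction_inequalities_general (ρ : RankFunction C) :
    (∀ ⦃X Y Z : C⦄ (g : X ⟶ Y) (f : Y ⟶ Z),
      ρ.rank (g ≫ f) ≤ ρ.rank f ∧ ρ.rank (g ≫ f) ≤ ρ.rank g) ∧
    (∀ ⦃X Y : C⦄ (f g : X ⟶ Y), ρ.rank (f + g) ≤ ρ.rank f + ρ.rank g) ∧
    (∀ ⦃X₁ X₂ Y₁ Y₂ : C⦄ (f : X₁ ⟶ Y₁) (g : X₂ ⟶ Y₂) (h : X₂ ⟶ Y₁),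
      ρ.rank f + ρ.rank g ≤
        ρ.rank (biprod.desc (biprod.lift f 0) (biprod.lift h g))) :=
  ⟨fun _ _ _ g f => ⟨ρ.rank_comp_le_right g f, ρ.rank_comp_le_left g f⟩,
    fun _ _ => ρ.rank_add_le, fun _ _ _ _ => ρ.rank_add_rank_le_rank_triangular⟩

theorem rankFunction_inequalities (ρ : RankFunction C) :
    (∀ ⦃X Y Z : C⦄ (g : X ⟶ Y) (f : Y ⟶ Z),
      ρ.rank (g ≫ f) ≤ ρ.rank f ∧ ρ.rank (g ≫ f) ≤ ρ.rank g) ∧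
    (∀ ⦃X Y : C⦄ (f g : X ⟶ Y), ρ.rank (f + g) ≤ ρ.rank f + ρ.rank g) ∧
    (∀ ⦃X₁ X₂ Y₁ Y₂ : C⦄ (f : X₁ ⟶ Y₁) (g : X₂ ⟶ Y₂) (h : X₂ ⟶ Y₁),
      ρ.rank f + ρ.rank g ≤
        ρ.rank (biprod.desc (biprod.lift f 0) (biprod.lift h g))) :=
  rankFunction_inequalities_general ρ
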